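/- arXiv:2604.05174 — 7 statements merged into one kernel-verified Lean document; each statement's English description precedes it below -/
import Mathlib

section
/- Let n and k be positive integers with 2k ≤ n. Then the number of words w : Fin n → Fin 5 whose inversion number inv(w) = |{(i,j) : i < j and w(j) < w(i)}| is at most k² is at most (2·k·(n choose k)²)⁴. -/
/-- The inversion number of a word `w : Fin n → A` over a linearly ordered
alphabet `A`: the number of pairs `(i, j)` with `i < j` and `w j < w i`. -/
def invNum {n : ℕ} {A : Type*} [LinearOrder A] (w : Fin n → A) : ℕ :=
  (Finset.univ.filter (fun p : Fin n × Fin n => p.1 < p.2 ∧ w p.2 < w p.1)).card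

open Finset in
theorem vander_aux (n : ℕ) : ∀ p q : ℕ,
    ∑ a ∈ range (n + 1), a.choose p * (n - a).choose q = (n + 1).choose (p + q + 1) := by
  induction n with
  | zero =>
    intro p q
    rcases p with _ | p <;> rcases q with _ | q <;> simp
    all_goals exact (Nat.choose_eq_zero_of_lt (by omega)).symm
  | succ n ih =>
    intro p q
    rw [sum_range_succ]
    rcases q with _ | q
    · have h := ih p 0
      simp only [Nat.choose_zero_right, mul_one, Nat.add_zero] at h ⊢
      rw [h, Nat.choose_succ_succ (n + 1) p]
      ring
    · have h : ∑ a ∈ range (n + 1), a.choose p * (n + 1 - a).choose (q + 1)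
          = ∑ a ∈ range (n + 1), (a.choose p * (n - a).choose q
            + a.choose p * (n - a).choose (q + 1)) := by
        apply sum_congr rfl
        intro a ha
        have : a < n + 1 := mem_range.1 ha
        rw [show n + 1 - a = (n - a) + 1 by omega, Nat.choose_succ_succ, mul_add]
      rw [h, sum_add_distrib, ih, ih, Nat.choose_succ_succ (n + 1) (p + (q + 1))]
      simp [add_assoc]

theorem choose_add_le_aux (n i j : ℕ) : n.choose (i + j) ≤ n.choose i * n.choose j := by
  by_cases h : i + j ≤ n
  · have h1 := Nat.choose_mul (n := n) (Nat.le_add_right i j)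
    have h2 : (n - i).choose (i + j - i) ≤ n.choose j := by
      rw [Nat.add_sub_cancel_left]
      exact Nat.choose_le_choose j (Nat.sub_le n i)
    have h3 : 0 < (i + j).choose i := Nat.choose_pos (Nat.le_add_right i j)
    calc n.choose (i + j) ≤ n.choose (i + j) * (i + j).choose i := Nat.le_mul_of_pos_right _ h3
      _ = _ := h1
      _ ≤ _ := Nat.mul_le_mul_left _ h2
  · rw [Nat.choose_eq_zero_of_lt (by omega)]; exact Nat.zero_le _

theorem choose_mono_aux (n k : ℕ) (hkn : 2 * k ≤ n) : ∀ d, d ≤ k → n.choose d ≤ n.choose k := by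
  induction k with
  | zero => intro d hd; rw [Nat.le_zero.1 hd]
  | succ k ih =>
    intro d hd
    rcases Nat.lt_or_ge d (k + 1) with h | h
    · exact (ih (by omega) d (by omega)).trans
        (Nat.choose_le_succ_of_lt_half_left (by omega))
    · rw [le_antisymm hd h]

theorem term_aux (n k d : ℕ) (hkn : 2 * k ≤ n) (hd : d < k) :
    (n + 1).choose (d + d + 1) ≤ 2 * (n.choose k) ^ 2 := by
  rw [Nat.choose_succ_succ]
  have h1 := choose_add_le_aux n d d
  have h2 := choose_add_le_aux n d (d + 1)
  have h3 := choose_mono_aux n k hkn d hd.le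
  have h4 := choose_mono_aux n k hkn (d + 1) hd
  have h5 := Nat.mul_le_mul h3 h3
  have h6 := Nat.mul_le_mul h3 h4
  rw [← add_assoc] at h2
  simp only [Nat.succ_eq_add_one]
  nlinarith

theorem final_aux (n k : ℕ) (hk : 0 < k) (hkn : 2 * k ≤ n) :
    (n + 1) + ∑ d ∈ Finset.range k, (n + 1).choose (d + d + 1) ≤ 2 * k * (n.choose k) ^ 2 := by
  obtain ⟨k, rfl⟩ : ∃ m, k = m + 1 := ⟨k - 1, by omega⟩
  rw [Finset.sum_range_succ']
  have h : ∑ d ∈ Finset.range k, (n + 1).choose (d + 1 + (d + 1) + 1)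
      ≤ ∑ d ∈ Finset.range k, 2 * (n.choose (k + 1)) ^ 2 := by
    apply Finset.sum_le_sum
    intro d hd
    exact term_aux n (k + 1) (d + 1) hkn (by have := Finset.mem_range.1 hd; omega)
  have h1 := choose_mono_aux n (k + 1) hkn 1 (by omega)
  simp only [Finset.sum_const, Finset.card_range, smul_eq_mul, Nat.choose_one_right] at h h1
  simp only [add_zero, zero_add, Nat.choose_one_right]
  have : n * n ≤ (n.choose (k + 1)) ^ 2 := by nlinarith
  have h2 : 2 ≤ n := by omega
  nlinarith

open Finset

def inv2 (n : ℕ) (U : Finset ℕ) : ℕ :=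
  ((U ×ˢ (range n \ U)).filter (fun p => p.1 < p.2)).card

def partA (n : ℕ) (U : Finset ℕ) : Finset ℕ := U.filter (· < n - U.card)

def partB (n : ℕ) (U : Finset ℕ) : Finset ℕ := (range n \ U).filter (n - U.card ≤ ·)

theorem card_AB (n : ℕ) (U : Finset ℕ) (hU : U ⊆ range n) :
    (partA n U).card = (partB n U).card := by
  have hc : U.card ≤ n := by simpa using card_le_card hU
  have h1 : (partA n U).card + (U.filter (fun x => ¬ (x < n - U.card))).card = U.card :=
    card_filter_add_card_filter_not _
  have h2 : (partB n U).card + (U.filter (fun x => ¬ (x < n - U.card))).card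
      = (Ico (n - U.card) n).card := by
    rw [← card_union_of_disjoint]
    · congr 1
      ext x
      have := @hU x
      simp only [partB, mem_union, mem_filter, mem_sdiff, mem_range, mem_Ico] at *
      by_cases hx : x ∈ U <;> simp [hx] at * <;> omega
    · rw [disjoint_left]
      intro x hx hx'
      simp only [partB, mem_filter, mem_sdiff] at hx hx'
      exact hx.1.2 hx'.1
  rw [Nat.card_Ico] at h2
  omega

theorem AB_subset (n : ℕ) (U : Finset ℕ) :
    partA n U ×ˢ partB n U ⊆ (U ×ˢ (range n \ U)).filter (fun p => p.1 < p.2) := by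
  intro p hp
  simp only [partA, partB, mem_product, mem_filter] at hp ⊢
  exact ⟨⟨hp.1.1, hp.2.1⟩, lt_of_lt_of_le hp.1.2 hp.2.2⟩

theorem AB_inj (n : ℕ) (U V : Finset ℕ) (hU : U ⊆ range n) (hV : V ⊆ range n)
    (ha : n - U.card = n - V.card) (hA : partA n U = partA n V) (hB : partB n U = partB n V) :
    U = V := by
  ext x
  have h1 := Finset.ext_iff.1 hA x
  have h2 := Finset.ext_iff.1 hB x
  have h3 := @hU x
  have h4 := @hV x
  simp only [partA, partB, mem_filter, mem_sdiff, ha] at h1 h2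
  by_cases hx : x < n - V.card
  · simpa [hx] using h1
  · have := not_lt.1 hx
    by_cases hx' : x ∈ range n
    · simp only [hx', this] at h2
      tauto
    · tauto

theorem extremal (n k : ℕ) (U : Finset ℕ) (hU : U ⊆ range n) (hA : (partA n U).card = k)
    (hi : inv2 n U ≤ k ^ 2) :
    partA n U = Ico (n - U.card - k) (n - U.card) ∧
    partB n U = Ico (n - U.card) (n - U.card + k) := by
  have hB : (partB n U).card = k := by rw [← card_AB n U hU, hA]
  have heq := eq_of_subset_of_card_le (AB_subset n U) (by
    rw [card_product, hA, hB, ← sq]; exact hi)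
  have key : ∀ x y, x ∈ U → y < n → y ∉ U → x < y → x ∈ partA n U ∧ y ∈ partB n U := by
    intro x y hx hy hyU hxy
    have : (x, y) ∈ partA n U ×ˢ partB n U := by
      rw [heq]; simp [hx, hy, hyU, hxy]
    exact mem_product.1 this
  have subA : partA n U ⊆ Ico (n - U.card - k) (n - U.card) := by
    intro x hx
    have hx' := mem_filter.1 hx
    have : Ico x (n - U.card) ⊆ partA n U := by
      intro y hy
      have hy' := mem_Ico.1 hy
      refine mem_filter.2 ⟨?_, hy'.2⟩
      by_contra hyU
      have hne : x ≠ y := fun h => hyU (h ▸ hx'.1)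
      have := (key x y hx'.1 (by omega) hyU (by omega)).2
      have := (mem_filter.1 this).2
      omega
    have := card_le_card this
    rw [Nat.card_Ico, hA] at this
    exact mem_Ico.2 ⟨by omega, hx'.2⟩
  have subB : partB n U ⊆ Ico (n - U.card) (n - U.card + k) := by
    intro y hy
    have hy' := mem_filter.1 hy
    have hy2 := mem_sdiff.1 hy'.1
    have hyn := mem_range.1 hy2.1
    have : Ico (n - U.card) (y + 1) ⊆ partB n U := by
      intro x hx
      have hx' := mem_Ico.1 hx
      refine mem_filter.2 ⟨mem_sdiff.2 ⟨mem_range.2 (by omega), ?_⟩, hx'.1⟩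
      intro hxU
      have hne : x ≠ y := fun h => hy2.2 (h ▸ hxU)
      have := (key x y hxU hyn hy2.2 (by omega)).1
      have := (mem_filter.1 this).2
      omega
    have := card_le_card this
    rw [Nat.card_Ico, hB] at this
    exact mem_Ico.2 ⟨hy'.2, by omega⟩
  have hB2 : partB n U = Ico (n - U.card) (n - U.card + k) :=
    eq_of_subset_of_card_le subB (by rw [Nat.card_Ico, hB]; omega)
  refine ⟨eq_of_subset_of_card_le subA (by rw [Nat.card_Ico, hA]; omega), hB2⟩

def lowSets (n k : ℕ) : Finset (Finset ℕ) :=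
  (range n).powerset.filter (fun U => inv2 n U ≤ k ^ 2)

theorem low_top (n k : ℕ) :
    ((lowSets n k).filter (fun U => ¬ (partA n U).card < k)).card ≤ n + 1 := by
  have hk : ∀ U ∈ (lowSets n k).filter (fun U => ¬ (partA n U).card < k),
      U ⊆ range n ∧ (partA n U).card = k ∧ inv2 n U ≤ k ^ 2 := by
    intro U hU
    simp only [lowSets, mem_filter, mem_powerset] at hU
    obtain ⟨⟨h1, h2⟩, h3⟩ := hU
    refine ⟨h1, ?_, h2⟩
    have h4 := card_le_card (AB_subset n U)
    rw [card_product, ← card_AB n U h1, ← sq] at h4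
    have := (Nat.pow_le_pow_iff_left (two_ne_zero)).1 (h4.trans h2)
    omega
  have := card_le_card_of_injOn (t := range (n + 1)) (fun U : Finset ℕ => n - U.card)
    (s := (lowSets n k).filter (fun U => ¬ (partA n U).card < k))
    (by intro U _; simp)
    (by
      intro U hU V hV h
      obtain ⟨u1, u2, u3⟩ := hk U hU
      obtain ⟨v1, v2, v3⟩ := hk V hV
      have hu := extremal n k U u1 u2 u3
      have hv := extremal n k V v1 v2 v3
      have h' : n - U.card = n - V.card := h
      refine AB_inj n U V u1 v1 h' ?_ ?_
      · rw [hu.1, hv.1, h']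
      · rw [hu.2, hv.2, h'])
  simpa using this

theorem low_bot (n k : ℕ) :
    ((lowSets n k).filter (fun U => (partA n U).card < k)).card
      ≤ ∑ d ∈ range k, (n + 1).choose (d + d + 1) := by
  rw [card_eq_sum_card_fiberwise (t := range k ×ˢ range (n + 1))
    (f := fun U => ((partA n U).card, n - U.card))
    (by intro U hU; have := (mem_filter.1 hU).2; simp [this])]
  rw [sum_product]
  apply sum_le_sum
  intro d _
  rw [← vander_aux]
  apply sum_le_sum
  intro a ha
  have ha' : a ≤ n := by have := mem_range.1 ha; omega
  have hc : (powersetCard d (range a) ×ˢ powersetCard d (Ico a n)).card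
      = a.choose d * (n - a).choose d := by
    rw [card_product, card_powersetCard, card_powersetCard, card_range, Nat.card_Ico]
  rw [← hc]
  apply card_le_card_of_injOn (fun U => (partA n U, partB n U))
  · intro U hU
    simp only [lowSets, coe_filter, mem_filter, mem_powerset, Set.mem_ofPred_eq,
      Prod.mk.injEq] at hU
    obtain ⟨⟨⟨h1, _⟩, _⟩, h2, h3⟩ := hU
    have hB := card_AB n U h1
    simp only [coe_product, Set.mem_prod, mem_coe, mem_powersetCard]
    refine ⟨⟨?_, h2⟩, ?_, by omega⟩
    · intro x hx
      have := (mem_filter.1 hx).2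
      rw [mem_range]; omega
    · intro x hx
      have h5 := mem_filter.1 hx
      have := mem_range.1 (mem_sdiff.1 h5.1).1
      rw [mem_Ico]; omega
  · intro U hU V hV h
    simp only [lowSets, coe_filter, mem_filter, mem_powerset, Set.mem_ofPred_eq,
      Prod.mk.injEq] at hU hV h
    exact AB_inj n U V hU.1.1.1 hV.1.1.1 (hU.2.2.trans hV.2.2.symm) h.1 h.2

theorem low_card (n k : ℕ) (hk : 0 < k) (hkn : 2 * k ≤ n) :
    (lowSets n k).card ≤ 2 * k * (n.choose k) ^ 2 := by
  rw [← card_filter_add_card_filter_not (s := lowSets n k) (fun U => (partA n U).card < k)]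
  have h1 := low_top n k
  have h2 := low_bot n k
  have h3 := final_aux n k hk hkn
  omega

def thr {n : ℕ} (w : Fin n → Fin 5) (t : Fin 4) : Finset ℕ :=
  (univ.filter (fun i => t.castSucc < w i)).map Fin.valEmbedding

theorem mem_thr {n : ℕ} (w : Fin n → Fin 5) (t : Fin 4) (i : Fin n) :
    (i : ℕ) ∈ thr w t ↔ t.castSucc < w i := by
  simp [thr, Fin.val_inj]

theorem thr_inj {n : ℕ} : Function.Injective (thr (n := n)) := by
  intro w v h
  funext i
  have h' : ∀ t : Fin 4, t.castSucc < w i ↔ t.castSucc < v i := by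
    intro t; rw [← mem_thr, ← mem_thr, h]
  generalize w i = a at h'
  generalize v i = b at h'
  revert a b
  decide

theorem thr_low {n : ℕ} (w : Fin n → Fin 5) (t : Fin 4) :
    thr w t ⊆ range n ∧ inv2 n (thr w t) ≤ invNum w := by
  have hs : thr w t ⊆ range n := by
    intro x hx
    obtain ⟨i, _, rfl⟩ := mem_map.1 hx
    simp
  refine ⟨hs, ?_⟩
  unfold inv2 invNum
  rw [← card_map (Fin.valEmbedding.prodMap Fin.valEmbedding)]
  apply card_le_card
  rintro ⟨x, y⟩ hp
  simp only [mem_filter, mem_product, mem_sdiff, mem_range] at hp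
  obtain ⟨⟨hx, hy, hyU⟩, hxy⟩ := hp
  have hxn := mem_range.1 (hs hx)
  have h1 := (mem_thr w t ⟨x, hxn⟩).1 hx
  have h2 := mt (mem_thr w t ⟨y, hy⟩).2 hyU
  refine mem_map.2 ⟨(⟨x, hxn⟩, ⟨y, hy⟩), ?_, rfl⟩
  simp only [mem_filter, mem_univ, true_and]
  exact ⟨hxy, lt_of_le_of_lt (not_lt.1 h2) h1⟩

theorem count_low_inversion_words_five_letters (n k : ℕ) (hn : 0 < n) (hk : 0 < k)
    (hkn : 2 * k ≤ n) :
    (Finset.univ.filter (fun w : Fin n → Fin 5 => invNum w ≤ k ^ 2)).card ≤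
      (2 * k * (n.choose k) ^ 2) ^ 4 := by
  have h := card_le_card_of_injOn (t := Fintype.piFinset (fun _ : Fin 4 => lowSets n k))
    (s := Finset.univ.filter (fun w : Fin n → Fin 5 => invNum w ≤ k ^ 2)) thr
    (by
      intro w hw
      have hw' := (mem_filter.1 hw).2
      rw [mem_coe, Fintype.mem_piFinset]
      intro t
      obtain ⟨h1, h2⟩ := thr_low w t
      exact mem_filter.2 ⟨mem_powerset.2 h1, h2.trans hw'⟩)
    thr_inj.injOn
  rw [Fintype.card_piFinset_const] at h
  exact h.trans (Nat.pow_le_pow_left (low_card n k hk hkn) 4)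
end

section
/- For all real numbers T ≥ 0 and δ ≥ 0, consider the points of the hyperbolic upper half-plane ℍ given by b = i, c = e^δ·i, a = −tanh(T) + i·(cosh T)⁻¹, and d = e^δ·(−tanh(T) + i·(cosh T)⁻¹). Then dist(a,b) = T, dist(b,c) = δ, dist(c,d) = T, and cosh(dist(a,d)) = cosh(T)²·(cosh(δ) − 1) + 1, where dist denotes the hyperbolic distance on ℍ. -/
open UpperHalfPlane

/-- The point `b = i` of the upper half-plane. -/
noncomputable def ptB : UpperHalfPlane :=
  ⟨Complex.I, by simp⟩

/-- The point `c = e^δ · i` of the upper half-plane. -/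
noncomputable def ptC (δ : ℝ) : UpperHalfPlane :=
  ⟨Complex.ofReal (Real.exp δ) * Complex.I, by
    simp only [Complex.mul_im, Complex.ofReal_re, Complex.ofReal_im, Complex.I_im,
      Complex.I_re, mul_one, mul_zero, add_zero]
    exact Real.exp_pos δ⟩

/-- The point `a = -tanh T + i·(cosh T)⁻¹` of the upper half-plane. -/
noncomputable def ptA (T : ℝ) : UpperHalfPlane :=
  ⟨-Complex.ofReal (Real.tanh T) + Complex.I * Complex.ofReal (Real.cosh T)⁻¹, by
    simp only [Complex.add_im, Complex.neg_im, Complex.ofReal_im, Complex.mul_im,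
      Complex.I_re, Complex.I_im, Complex.ofReal_re, neg_zero, zero_mul, one_mul,
      zero_add]
    exact inv_pos.2 (Real.cosh_pos T)⟩

/-- The point `d = e^δ · (-tanh T + i·(cosh T)⁻¹)` of the upper half-plane. -/
noncomputable def ptD (T δ : ℝ) : UpperHalfPlane :=
  ⟨Complex.ofReal (Real.exp δ) *
      (-Complex.ofReal (Real.tanh T) + Complex.I * Complex.ofReal (Real.cosh T)⁻¹), by
    simp only [Complex.mul_im, Complex.ofReal_re, Complex.ofReal_im, Complex.add_im,
      Complex.add_re, Complex.neg_im, Complex.neg_re, Complex.I_re, Complex.I_im,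
      Complex.mul_im, Complex.mul_re, neg_zero, zero_mul, one_mul, mul_zero,
      zero_add, add_zero, zero_sub, sub_zero]
    have h1 : (0:ℝ) < Real.exp δ := Real.exp_pos δ
    have h2 : (0:ℝ) < (Real.cosh T)⁻¹ := inv_pos.2 (Real.cosh_pos T)
    positivity⟩

/-- The hyperbolic 4-gon `a b c d` with right angles at `b` and `c`, sides `ab`, `cd` of
length `T`, and side `bc` of length `δ`, satisfies
`cosh (dist a d) = cosh T ^ 2 * (cosh δ - 1) + 1`. -/
theorem hyperbolic_four_gon_dist (T δ : ℝ) (hT : 0 ≤ T) (hδ : 0 ≤ δ) :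
    dist (ptA T) ptB = T ∧ dist ptB (ptC δ) = δ ∧ dist (ptC δ) (ptD T δ) = T ∧
      Real.cosh (dist (ptA T) (ptD T δ)) = Real.cosh T ^ 2 * (Real.cosh δ - 1) + 1 := by
  have hc := Real.cosh_pos T
  have he := Real.exp_pos δ
  have hs := Real.cosh_sq T
  have hcδ : Real.cosh δ = (Real.exp δ + (Real.exp δ)⁻¹) / 2 := by
    rw [Real.cosh_eq, Real.exp_neg]
  have hAr : (ptA T).re = -(Real.sinh T / Real.cosh T) := by
    change (-Complex.ofReal (Real.tanh T) + Complex.I * Complex.ofReal (Real.cosh T)⁻¹).re = _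
    rw [Complex.add_re, Complex.re_mul_ofReal, Complex.neg_re, Complex.ofReal_re, Complex.I_re,
      Real.tanh_eq_sinh_div_cosh]
    ring
  have hAi : (ptA T).im = (Real.cosh T)⁻¹ := by
    change (-Complex.ofReal (Real.tanh T) + Complex.I * Complex.ofReal (Real.cosh T)⁻¹).im = _
    rw [Complex.add_im, Complex.im_mul_ofReal, Complex.neg_im, Complex.ofReal_im, Complex.I_im]
    ring
  have hDr : (ptD T δ).re = Real.exp δ * (ptA T).re := Complex.re_ofReal_mul _ _
  have hDi : (ptD T δ).im = Real.exp δ * (ptA T).im := Complex.im_ofReal_mul _ _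
  have hBr : ptB.re = 0 := Complex.I_re
  have hBi : ptB.im = 1 := Complex.I_im
  have hCr : (ptC δ).re = 0 := (Complex.re_ofReal_mul _ _).trans (by simp)
  have hCi : (ptC δ).im = Real.exp δ := (Complex.im_ofReal_mul _ _).trans (by simp)
  have key : ∀ (z w : UpperHalfPlane) (r : ℝ), 0 ≤ r →
      Real.cosh (dist z w) = Real.cosh r → dist z w = r := by
    intro z w r hr h
    exact Real.cosh_strictMonoOn.injOn (Set.mem_Ici.2 dist_nonneg) (Set.mem_Ici.2 hr) h
  refine ⟨key _ _ _ hT ?_, key _ _ _ hδ ?_, key _ _ _ hT ?_, ?_⟩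
  · rw [UpperHalfPlane.cosh_dist', hAr, hAi, hBr, hBi]
    field_simp
    linear_combination -hs
  · rw [UpperHalfPlane.cosh_dist', hBr, hBi, hCr, hCi, hcδ]
    field_simp
    ring
  · rw [UpperHalfPlane.cosh_dist', hDr, hDi, hAr, hAi, hCr, hCi]
    field_simp
    linear_combination -Real.exp δ ^ 2 * hs
  · rw [UpperHalfPlane.cosh_dist', hDr, hDi, hAr, hAi, hcδ]
    field_simp
    linear_combination -(1 - Real.exp δ) ^ 2 * hs
end

section
/- Let M be a compact metric space, φ a continuous flow of ℝ on M (Flow ℝ M), and μ a Borel probability measure on M such that for every t ∈ ℝ the time-t map φ t is measure-preserving for μ, and such that μ is ergodic for the flow: every measurable set s ⊆ M with (φ t)⁻¹(s) = s for all t ∈ ℝ satisfies μ(s) = 0 or μ(s) = 1. For real T > 0 and ε > 0, let B(T,ε) = {v ∈ M : ∃ t ∈ [T, (1+ε)·T], dist(v, φ t v) < ε}. Then for every ε > 0, μ(B(T,ε)) tends to 1 as T → ∞. -/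
open MeasureTheory

/-- Points with no close return in the window form a set whose trace on a set of small diameter
has measure tending to zero. -/
theorem window_bad_aux
    {M : Type*} [MetricSpace M] [MeasurableSpace M] [BorelSpace M]
    (φ : Flow ℝ M) (μ : Measure M) [IsProbabilityMeasure μ]
    (hinv : ∀ t : ℝ, MeasurePreserving (φ t) μ μ)
    (ε : ℝ) (hε : 0 < ε) (A : Set M) (hA : MeasurableSet A)
    (hd : ∀ x ∈ A, ∀ y ∈ A, dist x y < ε)
    (hE : ∀ T : ℝ, MeasurableSet {v : M | ∃ t ∈ Set.Icc T ((1 + ε) * T), dist v (φ t v) < ε}) :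
    Filter.Tendsto
      (fun T : ℝ => μ ({v : M | ∃ t ∈ Set.Icc T ((1 + ε) * T), dist v (φ t v) < ε}ᶜ ∩ A))
      Filter.atTop (nhds 0) := by
  rw [ENNReal.tendsto_nhds_zero]
  intro δ hδ
  by_contra hcon
  rw [Filter.not_eventually, Filter.frequently_atTop] at hcon
  obtain ⟨f, hf, hr⟩ := exists_seq_of_forall_finset_exists
    (fun T : ℝ => 0 ≤ T ∧
      δ < μ ({v : M | ∃ t ∈ Set.Icc T ((1 + ε) * T), dist v (φ t v) < ε}ᶜ ∩ A))
    (fun a b => (1 + ε) * a ≤ ε * b) (by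
      intro s hs
      obtain ⟨b, hb, hb'⟩ := hcon (∑ x ∈ s, (1 + ε) * x / ε)
      have h0 : ∀ x ∈ s, 0 ≤ (1 + ε) * x / ε := fun x hx => by
        have := (hs x hx).1
        positivity
      refine ⟨b, ⟨(Finset.sum_nonneg h0).trans hb, not_le.mp hb'⟩, fun x hx => ?_⟩
      have h1 := (Finset.single_le_sum h0 hx).trans hb
      rw [div_le_iff₀ hε] at h1
      linarith)
  set E : ℕ → Set M := fun n => φ (-((1 + ε) * f n)) ⁻¹'
    ({v : M | ∃ t ∈ Set.Icc (f n) ((1 + ε) * f n), dist v (φ t v) < ε}ᶜ ∩ A) with hEdef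
  have hm : ∀ n, MeasurableSet
      ({v : M | ∃ t ∈ Set.Icc (f n) ((1 + ε) * f n), dist v (φ t v) < ε}ᶜ ∩ A) :=
    fun n => (hE _).compl.inter hA
  have key : ∀ i j, i < j → Disjoint (E i) (E j) := by
    intro i j hij
    rw [Set.disjoint_left]
    intro v hvi hvj
    refine hvj.1 ⟨(1 + ε) * f j - (1 + ε) * f i, ⟨?_, ?_⟩, ?_⟩
    · have := hr i j hij
      linarith
    · have : 0 ≤ (1 + ε) * f i := mul_nonneg (by linarith) (hf i).1
      linarith
    · rw [← φ.map_add]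
      have h : (1 + ε) * f j - (1 + ε) * f i + -((1 + ε) * f j) = -((1 + ε) * f i) := by ring
      rw [h]
      exact hd _ hvj.2 _ hvi.2
  have hdis : Pairwise (Function.onFun Disjoint E) := by
    intro i j hij
    rcases lt_or_gt_of_ne hij with h | h
    · exact key i j h
    · exact (key j i h).symm
  have hu := measure_iUnion (μ := μ) hdis (fun n => (hinv _).measurable (hm n))
  have h1 : ∑' _ : ℕ, δ ≤ ∑' n, μ (E n) := by
    refine ENNReal.tsum_le_tsum fun n => ?_
    rw [hEdef]
    simp only
    rw [(hinv _).measure_preimage (hm n).nullMeasurableSet]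
    exact (hf n).2.le
  rw [ENNReal.tsum_const_eq_top_of_ne_zero hδ.ne', ← hu, top_le_iff] at h1
  exact measure_ne_top _ _ h1

theorem measure_window_return_set_tendsto_one
    {M : Type*} [MetricSpace M] [CompactSpace M] [MeasurableSpace M] [BorelSpace M]
    (φ : Flow ℝ M) (μ : Measure M) [IsProbabilityMeasure μ]
    (hinv : ∀ t : ℝ, MeasurePreserving (φ t) μ μ)
    (herg : ∀ s : Set M, MeasurableSet s → (∀ t : ℝ, φ t ⁻¹' s = s) →
      μ s = 0 ∨ μ s = 1)
    (ε : ℝ) (hε : 0 < ε) :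
    Filter.Tendsto
      (fun T : ℝ => μ {v : M | ∃ t ∈ Set.Icc T ((1 + ε) * T), dist v (φ t v) < ε})
      Filter.atTop (nhds 1) := by
  have hE : ∀ T : ℝ,
      MeasurableSet {v : M | ∃ t ∈ Set.Icc T ((1 + ε) * T), dist v (φ t v) < ε} := by
    intro T
    have h : {v : M | ∃ t ∈ Set.Icc T ((1 + ε) * T), dist v (φ t v) < ε}
        = ⋃ t ∈ Set.Icc T ((1 + ε) * T), {v : M | dist v (φ t v) < ε} := by
      ext v
      simp
    rw [h]
    exact (isOpen_biUnion fun t _ => isOpen_lt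
      (continuous_id.dist (φ.continuous continuous_const continuous_id))
      continuous_const).measurableSet
  obtain ⟨s, -, hs, hcov⟩ := Metric.totallyBounded_iff.mp
    (isCompact_univ (X := M)).totallyBounded (ε / 2) (by positivity) |>.imp
      fun s h => (⟨trivial, h.1, h.2⟩ : True ∧ _ ∧ _)
  have hsum : Filter.Tendsto (fun T : ℝ => ∑ x ∈ hs.toFinset,
      μ ({v : M | ∃ t ∈ Set.Icc T ((1 + ε) * T), dist v (φ t v) < ε}ᶜ ∩ Metric.ball x (ε / 2)))
      Filter.atTop (nhds 0) := by
    rw [← Finset.sum_const_zero (s := hs.toFinset) (M := ENNReal)]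
    refine tendsto_finsetSum _ fun x _ => ?_
    refine window_bad_aux φ μ hinv ε hε _ Metric.isOpen_ball.measurableSet ?_ hE
    intro y hy z hz
    have h1 := dist_triangle_right y z x
    rw [Metric.mem_ball] at hy hz
    linarith
  have hc : Filter.Tendsto (fun T : ℝ =>
      μ ({v : M | ∃ t ∈ Set.Icc T ((1 + ε) * T), dist v (φ t v) < ε}ᶜ))
      Filter.atTop (nhds 0) := by
    refine tendsto_of_tendsto_of_tendsto_of_le_of_le tendsto_const_nhds hsum
      (fun _ => zero_le) fun T => ?_
    refine le_trans (measure_mono ?_) (measure_biUnion_finset_le _ _)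
    intro v hv
    have := hcov (Set.mem_univ v)
    simp only [Set.mem_iUnion] at this
    obtain ⟨x, hx, hvx⟩ := this
    simp only [Set.mem_iUnion]
    exact ⟨x, hs.mem_toFinset.mpr hx, hv, hvx⟩
  have h2 := ENNReal.Tendsto.sub (tendsto_const_nhds (x := (1 : ENNReal))) hc
    (Or.inl ENNReal.one_ne_top)
  rw [tsub_zero] at h2
  refine h2.congr fun T => ?_
  rw [← prob_compl_eq_one_sub (hE T).compl, compl_compl]
end

section
/- Let M be a compact metric space, φ a continuous flow of ℝ on M (Flow ℝ M), and μ a Borel probability measure on M such that for every t ∈ ℝ the time-t map φ t is measure-preserving for μ, and such that μ is ergodic for the flow: every measurable set s ⊆ M with (φ t)⁻¹(s) = s for all t ∈ ℝ satisfies μ(s) = 0 or μ(s) = 1. Let K ⊆ M be a measurable set with μ(K) > 0 and let ε > 0. Then for μ-almost every v ∈ M there exists T₀ > 0 such that for every real T ≥ T₀ there exists t ∈ [T, (1+ε)·T] with φ t v ∈ K. -/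
open MeasureTheory

/-- Garsia's maximal functions. -/
noncomputable def garsia {M : Type*} (f : M → M) (g : M → ℝ) : ℕ → M → ℝ
  | 0 => fun _ => 0
  | n + 1 => fun v => max 0 (g v + garsia f g n (f v))

theorem garsia_nonneg {M : Type*} (f : M → M) (g : M → ℝ) (n : ℕ) (v : M) :
    0 ≤ garsia f g n v := by
  cases n with
  | zero => exact le_rfl
  | succ n => exact le_max_left _ _

theorem garsia_mono {M : Type*} (f : M → M) (g : M → ℝ) (n : ℕ) :
    ∀ v, garsia f g n v ≤ garsia f g (n + 1) v := by
  induction n with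
  | zero => intro v; exact garsia_nonneg f g 1 v
  | succ n ih =>
    intro v
    have := ih (f v)
    exact max_le_max le_rfl (by linarith)

theorem garsia_measurable {M : Type*} [MeasurableSpace M] {f : M → M} {g : M → ℝ}
    (hf : Measurable f) (hg : Measurable g) (n : ℕ) : Measurable (garsia f g n) := by
  induction n with
  | zero => exact measurable_const
  | succ n ih => exact measurable_const.max (hg.add (ih.comp hf))

theorem garsia_integrable {M : Type*} [MeasurableSpace M] {μ : Measure M}
    [IsProbabilityMeasure μ] {f : M → M} {g : M → ℝ}
    (hf : MeasurePreserving f μ μ) (hg : Integrable g μ) (n : ℕ) :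
    Integrable (garsia f g n) μ := by
  induction n with
  | zero => exact integrable_const 0
  | succ n ih => exact (integrable_const 0).sup (hg.add (hf.integrable_comp_of_integrable ih))

/-- The maximal ergodic inequality. -/
theorem garsia_ineq {M : Type*} [MeasurableSpace M] {μ : Measure M}
    [IsProbabilityMeasure μ] {f : M → M} {g : M → ℝ}
    (hf : MeasurePreserving f μ μ) (hgm : Measurable g) (hg : Integrable g μ) (n : ℕ) :
    0 ≤ ∫ v in {v | 0 < garsia f g n v}, g v ∂μ := by
  have hm := garsia_measurable hf.measurable hgm n
  have hi := garsia_integrable hf hg n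
  have hic : Integrable (fun v => garsia f g n (f v)) μ := hf.integrable_comp_of_integrable hi
  have hS : MeasurableSet {v | 0 < garsia f g n v} := measurableSet_lt measurable_const hm
  have h1 : ∫ v, garsia f g n (f v) ∂μ = ∫ v, garsia f g n v ∂μ := by
    have h := integral_map (μ := μ) hf.measurable.aemeasurable
      (f := garsia f g n) hm.aestronglyMeasurable
    rw [hf.map_eq] at h
    exact h.symm
  have h2 : ∫ v, (garsia f g n v - garsia f g n (f v)) ∂μ = 0 := by
    rw [integral_sub hi hic, h1, sub_self]
  rw [← integral_indicator hS]
  refine h2.symm.le.trans ?_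
  refine integral_mono (hi.sub hic) (hg.indicator hS) ?_
  intro v
  by_cases hv : 0 < garsia f g n v
  · have hmono := garsia_mono f g n v
    have hmax : garsia f g (n + 1) v = max 0 (g v + garsia f g n (f v)) := rfl
    have : garsia f g n v ≤ g v + garsia f g n (f v) := by
      rw [hmax] at hmono
      rcases le_max_iff.1 hmono with h | h
      · linarith
      · exact h
    have hv' : v ∈ {v | 0 < garsia f g n v} := hv
    simp only [Set.indicator_of_mem hv']
    linarith
  · have hv' : v ∉ {v | 0 < garsia f g n v} := hv
    simp only [Set.indicator_of_notMem hv']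
    have := garsia_nonneg f g n (f v)
    linarith [not_lt.1 hv]

theorem integral_nonneg_of_garsia {M : Type*} [MeasurableSpace M] {μ : Measure M}
    [IsProbabilityMeasure μ] {f : M → M} {g : M → ℝ}
    (hf : MeasurePreserving f μ μ) (hgm : Measurable g) (hg : Integrable g μ)
    (h : ∀ᵐ v ∂μ, ∃ n, 0 < garsia f g n v) : 0 ≤ ∫ v, g v ∂μ := by
  have hmono : Monotone (fun n => {v | 0 < garsia f g n v}) :=
    monotone_nat_of_le_succ (fun n v hv => lt_of_lt_of_le hv (garsia_mono f g n v))
  have ht := tendsto_setIntegral_of_monotone (μ := μ) (f := g)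
    (s := fun n => {v | 0 < garsia f g n v})
    (fun n => measurableSet_lt measurable_const (garsia_measurable hf.measurable hgm n))
    hmono hg.integrableOn
  have hU : ∫ v in ⋃ n, {v | 0 < garsia f g n v}, g v ∂μ = ∫ v, g v ∂μ := by
    rw [← setIntegral_univ (f := g) (μ := μ)]
    apply setIntegral_congr_set
    filter_upwards [h] with v hv
    apply propext
    exact ⟨fun _ => trivial, fun _ => Set.mem_iUnion.2 hv⟩
  rw [hU] at ht
  exact ge_of_tendsto' ht (fun n => garsia_ineq hf hgm hg n)

/-- Occupation time of `K` along the orbit of `v` up to time `T`. -/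
noncomputable def occ {M : Type*} [TopologicalSpace M] (φ : Flow ℝ M) (K : Set M)
    (T : ℝ) (v : M) : ℝ := ∫ s in (0:ℝ)..T, K.indicator (fun _ => (1:ℝ)) (φ s v)

section occ

variable {M : Type*} [MetricSpace M] [CompactSpace M] [MeasurableSpace M] [BorelSpace M]

theorem flow_meas (φ : Flow ℝ M) : Measurable (fun p : M × ℝ => φ p.2 p.1) :=
  (φ.continuous continuous_snd continuous_fst).measurable

theorem ind_meas (φ : Flow ℝ M) {K : Set M} (hK : MeasurableSet K) :
    Measurable (fun p : M × ℝ => K.indicator (fun _ => (1:ℝ)) (φ p.2 p.1)) :=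
  (measurable_const.indicator hK).comp (flow_meas φ)

theorem ind_bound (K : Set M) (x : M) : ‖K.indicator (fun _ => (1:ℝ)) x‖ ≤ 1 := by
  by_cases h : x ∈ K <;> simp [h]

theorem occ_ii (φ : Flow ℝ M) {K : Set M} (hK : MeasurableSet K) (v : M) (a b : ℝ) :
    IntervalIntegrable (fun s => K.indicator (fun _ => (1:ℝ)) (φ s v)) volume a b := by
  refine (intervalIntegrable_const (c := (1:ℝ))).mono_fun
    ((ind_meas φ hK).comp (measurable_const.prodMk measurable_id)).aestronglyMeasurable ?_
  filter_upwards with s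
  simpa using ind_bound K (φ s v)

theorem occ_add (φ : Flow ℝ M) {K : Set M} (hK : MeasurableSet K) (v : M) (s t : ℝ) :
    occ φ K (s + t) v = occ φ K s v + occ φ K t (φ s v) := by
  unfold occ
  rw [← intervalIntegral.integral_add_adjacent_intervals (occ_ii φ hK v 0 s)
    (occ_ii φ hK v s (s + t))]
  congr 1
  have := intervalIntegral.integral_comp_add_right (a := 0) (b := t)
    (fun u => K.indicator (fun _ => (1:ℝ)) (φ u v)) s
  rw [zero_add, add_comm t s] at this
  rw [← this]
  simp only [φ.map_add]

theorem occ_abs (φ : Flow ℝ M) (K : Set M) (v : M) (t : ℝ) :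
    |occ φ K t v| ≤ |t| := by
  have := intervalIntegral.norm_integral_le_of_norm_le_const (a := 0) (b := t) (C := 1)
    (f := fun u => K.indicator (fun _ => (1:ℝ)) (φ u v)) (fun s _ => ind_bound K _)
  simpa [occ] using this

theorem occ_meas (φ : Flow ℝ M) {K : Set M} (hK : MeasurableSet K) (t : ℝ) :
    Measurable (occ φ K t) := by
  unfold occ
  simp only [intervalIntegral]
  exact ((ind_meas φ hK).stronglyMeasurable.integral_prod_right.measurable).sub
    ((ind_meas φ hK).stronglyMeasurable.integral_prod_right.measurable)

theorem occ_integral (φ : Flow ℝ M) (μ : Measure M) [IsProbabilityMeasure μ]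
    (hinv : ∀ t : ℝ, MeasurePreserving (φ t) μ μ) {K : Set M} (hK : MeasurableSet K) :
    ∫ v, occ φ K 1 v ∂μ = μ.real K := by
  unfold occ
  simp only [intervalIntegral.integral_of_le (zero_le_one (α := ℝ))]
  rw [integral_integral_swap]
  · have : ∀ s : ℝ, ∫ v, K.indicator (fun _ => (1:ℝ)) (φ s v) ∂μ = μ.real K := by
      intro s
      have h := integral_map (μ := μ) (hinv s).measurable.aemeasurable
        (f := K.indicator (fun _ => (1:ℝ)))
        (measurable_const.indicator hK).aestronglyMeasurable
      rw [(hinv s).map_eq] at h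
      rw [← h, integral_indicator hK]
      simp
    simp [this]
  · refine Integrable.of_bound (ind_meas φ hK).aestronglyMeasurable 1 ?_
    filter_upwards with p
    exact ind_bound K _

theorem occ_compl (φ : Flow ℝ M) {K : Set M} (hK : MeasurableSet K) (v : M) (t : ℝ) :
    occ φ Kᶜ t v = t - occ φ K t v := by
  have h : occ φ Kᶜ t v + occ φ K t v = t := by
    unfold occ
    rw [← intervalIntegral.integral_add (occ_ii φ hK.compl v 0 t) (occ_ii φ hK v 0 t)]
    have : ∀ s, Kᶜ.indicator (fun _ => (1:ℝ)) (φ s v) + K.indicator (fun _ => (1:ℝ)) (φ s v)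
        = 1 := by
      intro s
      by_cases hs : φ s v ∈ K <;> simp [hs]
    simp [this]
  linarith

/-- Times exceed the level `a` infinitely often, uniformly. -/
def exceed (φ : Flow ℝ M) (K : Set M) (a : ℝ) : Set M :=
  {v | ∃ k : ℕ, ∀ N : ℕ, ∃ n : ℕ, N ≤ n ∧ (a + 1 / ((k:ℝ) + 1)) * n < occ φ K n v}

theorem exceed_meas (φ : Flow ℝ M) {K : Set M} (hK : MeasurableSet K) (a : ℝ) :
    MeasurableSet (exceed φ K a) := by
  have : exceed φ K a = ⋃ k : ℕ, ⋂ N : ℕ, ⋃ n : ℕ, ⋃ _ : N ≤ n,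
      {v | (a + 1 / ((k:ℝ) + 1)) * n < occ φ K n v} := by
    ext v; simp [exceed]
  rw [this]
  exact MeasurableSet.iUnion fun k => MeasurableSet.iInter fun N => MeasurableSet.iUnion fun n =>
    MeasurableSet.iUnion fun _ => measurableSet_lt measurable_const (occ_meas φ hK n)

theorem exceed_sub (φ : Flow ℝ M) {K : Set M} (hK : MeasurableSet K) (a : ℝ) (t : ℝ) (v : M)
    (hv : v ∈ exceed φ K a) : φ t v ∈ exceed φ K a := by
  obtain ⟨k, hk⟩ := hv
  refine ⟨k + 1, fun N => ?_⟩
  set d : ℝ := 1 / ((k:ℝ) + 1) - 1 / (((k + 1 : ℕ):ℝ) + 1) with hd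
  have hdpos : 0 < d := by
    rw [hd, sub_pos]
    apply one_div_lt_one_div_of_lt
    · positivity
    · push_cast; linarith
  obtain ⟨N', hN'⟩ := exists_nat_gt (2 * |t| / d)
  obtain ⟨n, hn, hlt⟩ := hk (max N N')
  refine ⟨n, le_trans (le_max_left _ _) hn, ?_⟩
  have hn' : (N' : ℝ) ≤ n := by exact_mod_cast le_trans (le_max_right _ _) hn
  have h1 : 2 * |t| < d * n := by
    rw [div_lt_iff₀ hdpos] at hN'
    nlinarith
  have e1 := occ_add φ hK v t n
  have e2 := occ_add φ hK v n t
  rw [add_comm (n:ℝ) t] at e2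
  have b1 := abs_le.1 (occ_abs φ K v t)
  have b2 := abs_le.1 (occ_abs φ K (φ n v) t)
  have : (a + 1 / (((k + 1 : ℕ):ℝ) + 1)) * n = (a + 1 / ((k:ℝ) + 1)) * n - d * n := by
    rw [hd]; ring
  rw [this]
  linarith [b1.1, b1.2, b2.1, b2.2]

theorem exceed_inv (φ : Flow ℝ M) {K : Set M} (hK : MeasurableSet K) (a : ℝ) (t : ℝ) :
    φ t ⁻¹' exceed φ K a = exceed φ K a := by
  ext v
  refine ⟨fun h => ?_, fun h => exceed_sub φ hK a t v h⟩
  have := exceed_sub φ hK a (-t) _ h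
  rwa [← φ.map_add, neg_add_cancel, φ.map_zero_apply] at this

theorem occ_le_garsia (φ : Flow ℝ M) {K : Set M} (hK : MeasurableSet K) (a : ℝ) (n : ℕ) :
    ∀ v, occ φ K n v - a * n ≤ garsia (φ 1) (fun v => occ φ K 1 v - a) n v := by
  induction n with
  | zero => intro v; simp [occ, garsia]
  | succ n ih =>
    intro v
    refine le_trans ?_ (le_max_right _ _)
    have := ih (φ 1 v)
    have e := occ_add φ hK v 1 n
    push_cast
    rw [add_comm (n:ℝ) 1, e]
    linarith

theorem ae_upper (φ : Flow ℝ M) (μ : Measure M) [IsProbabilityMeasure μ]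
    (hinv : ∀ t : ℝ, MeasurePreserving (φ t) μ μ)
    (herg : ∀ s : Set M, MeasurableSet s → (∀ t : ℝ, φ t ⁻¹' s = s) →
      μ s = 0 ∨ μ s = 1)
    {K : Set M} (hK : MeasurableSet K) (δ : ℝ) (hδ : 0 < δ) :
    ∀ᵐ v ∂μ, ∃ N : ℕ, ∀ n : ℕ, N ≤ n → occ φ K n v ≤ (μ.real K + δ) * n := by
  obtain ⟨k, hk⟩ := exists_nat_one_div_lt (half_pos hδ)
  set a := μ.real K + δ / 2 with ha
  have hm := exceed_meas φ hK a
  rcases herg _ hm (exceed_inv φ hK a) with h0 | h1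
  · have : ∀ᵐ v ∂μ, v ∉ exceed φ K a := measure_eq_zero_iff_ae_notMem.1 h0
    filter_upwards [this] with v hv
    by_contra! hcon
    apply hv
    refine ⟨k, fun N => ?_⟩
    obtain ⟨n, hn, h⟩ := hcon N
    refine ⟨n, hn, lt_of_le_of_lt ?_ h⟩
    apply mul_le_mul_of_nonneg_right _ (Nat.cast_nonneg n)
    linarith
  · exfalso
    have hae : ∀ᵐ v ∂μ, v ∈ exceed φ K a := (mem_ae_iff_prob_eq_one hm).2 h1
    have hoi : Integrable (occ φ K 1) μ := by
      refine Integrable.of_bound (occ_meas φ hK 1).aestronglyMeasurable 1 ?_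
      filter_upwards with v
      simpa using occ_abs φ K v 1
    have := integral_nonneg_of_garsia (μ := μ) (f := φ 1) (g := fun v => occ φ K 1 v - a)
      (hinv 1) ((occ_meas φ hK 1).sub measurable_const) (hoi.sub (integrable_const a)) (by
        filter_upwards [hae] with v hv
        obtain ⟨j, hj⟩ := hv
        obtain ⟨n, _, hn⟩ := hj 0
        refine ⟨n, lt_of_lt_of_le ?_ (occ_le_garsia φ hK a n v)⟩
        have : 0 ≤ 1 / ((j:ℝ) + 1) * n := by positivity
        linarith)
    rw [integral_sub hoi (integrable_const a), occ_integral φ μ hinv hK] at this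
    simp at this
    linarith

end occ

theorem ae_eventually_window_hitting_flow
    {M : Type*} [MetricSpace M] [CompactSpace M] [MeasurableSpace M] [BorelSpace M]
    (φ : Flow ℝ M) (μ : Measure M) [IsProbabilityMeasure μ]
    (hinv : ∀ t : ℝ, MeasurePreserving (φ t) μ μ)
    (herg : ∀ s : Set M, MeasurableSet s → (∀ t : ℝ, φ t ⁻¹' s = s) →
      μ s = 0 ∨ μ s = 1)
    (K : Set M) (hK : MeasurableSet K) (hKpos : 0 < μ K) (ε : ℝ) (hε : 0 < ε) :
    ∀ᵐ v ∂μ, ∃ T₀ : ℝ, 0 < T₀ ∧ ∀ T : ℝ, T₀ ≤ T →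
      ∃ t ∈ Set.Icc T ((1 + ε) * T), φ t v ∈ K := by
  have hc : 0 < μ.real K := ENNReal.toReal_pos hKpos.ne' (measure_ne_top μ K)
  have hcc : μ.real Kᶜ = 1 - μ.real K := probReal_compl_eq_one_sub hK
  set c := μ.real K with hcdef
  set δ : ℝ := c * ε / (2 * (2 + ε)) with hδdef
  have hδ : 0 < δ := by positivity
  have hδe : δ * (2 + ε) = c * ε / 2 := by rw [hδdef]; field_simp
  have hδc : δ < c := by nlinarith
  filter_upwards [ae_upper φ μ hinv herg hK δ hδ, ae_upper φ μ hinv herg hK.compl δ hδ]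
    with v ⟨N₁, h₁⟩ ⟨N₂, h₂⟩
  refine ⟨N₁ + N₂ + 5 / ε, by positivity, fun T hT => ?_⟩
  have h5 : 0 < 5 / ε := by positivity
  have hN1 : (0:ℝ) ≤ N₁ := Nat.cast_nonneg _
  have hN2 : (0:ℝ) ≤ N₂ := Nat.cast_nonneg _
  have hT0 : 0 < T := by linarith
  have hεT : 5 ≤ ε * T := by
    have : 5 / ε ≤ T := by linarith
    rwa [div_le_iff₀ hε, mul_comm] at this
  by_contra! hcon
  set n := ⌈T⌉₊
  set m := ⌊(1 + ε) * T⌋₊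
  have hn1 : T ≤ n := Nat.le_ceil T
  have hn2 : (n:ℝ) < T + 1 := Nat.ceil_lt_add_one hT0.le
  have hm1 : (m:ℝ) ≤ (1 + ε) * T := Nat.floor_le (by positivity)
  have hm2 : (1 + ε) * T < m + 1 := Nat.lt_floor_add_one _
  have hnm : (n:ℝ) ≤ m := by linarith
  have heq : occ φ K m v = occ φ K n v := by
    unfold occ
    rw [← intervalIntegral.integral_add_adjacent_intervals (occ_ii φ hK v 0 n)
      (occ_ii φ hK v n m)]
    have : ∫ s in (n:ℝ)..m, K.indicator (fun _ => (1:ℝ)) (φ s v) = 0 := by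
      apply intervalIntegral.integral_zero_ae
      filter_upwards with s hs
      rw [Set.uIoc_of_le hnm] at hs
      exact Set.indicator_of_notMem
        (hcon s ⟨hn1.trans hs.1.le, hs.2.trans hm1⟩) _
    rw [this, add_zero]
  have a1 := h₁ n (by
    have : (N₁:ℝ) ≤ n := by linarith
    exact_mod_cast this)
  have a2 := h₂ m (by
    have : (N₂:ℝ) ≤ m := by linarith
    exact_mod_cast this)
  rw [occ_compl φ hK, hcc, heq] at a2
  have a3 : (c - δ) * m ≤ (c + δ) * n := by linarith
  have a4 : (c - δ) * ((1 + ε) * T - 1) ≤ (c - δ) * m :=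
    mul_le_mul_of_nonneg_left (by linarith) (by linarith)
  have a5 : (c + δ) * n ≤ (c + δ) * (T + 1) :=
    mul_le_mul_of_nonneg_left (by linarith) (by linarith)
  have a6 : (c - δ) * ((1 + ε) * T - 1) - (c + δ) * (T + 1)
      = c * ε * T - δ * (2 + ε) * T - 2 * c := by ring
  rw [hδe] at a6
  nlinarith
end

section
/- Let n and k be positive integers with 2k ≤ n. Then the number of words w : Fin n → Fin 2 whose inversion number inv(w) = |{(i,j) : i < j and w(j) < w(i)}| is at most k² is at most 2·k·(n choose k)². -/
/-- The `k` smallest elements of a finset with at least `k` elements. -/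
lemma exists_first_k {α : Type*} [LinearOrder α] (O : Finset α) (k : ℕ) (h : k ≤ O.card) :
    ∃ S ⊆ O, S.card = k ∧ ∀ x ∈ O, x ∉ S → ∀ s ∈ S, s < x := by
  induction k with
  | zero => exact ⟨∅, by simp, by simp, by simp⟩
  | succ k ih =>
    obtain ⟨S, hS, hc, hlt⟩ := ih (by omega)
    have hne : (O \ S).Nonempty := by
      rw [← Finset.card_pos, Finset.card_sdiff_of_subset hS]
      omega
    obtain ⟨m, hm, hmin⟩ := (O \ S).exists_min_image id hne
    rw [Finset.mem_sdiff] at hm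
    refine ⟨insert m S, ?_, ?_, ?_⟩
    · intro x hx
      rcases Finset.mem_insert.1 hx with rfl | hx
      · exact hm.1
      · exact hS hx
    · rw [Finset.card_insert_of_notMem hm.2, hc]
    · intro x hx hxs s hs
      rw [Finset.mem_insert, not_or] at hxs
      rcases Finset.mem_insert.1 hs with rfl | hs
      · exact lt_of_le_of_ne (hmin x (Finset.mem_sdiff.2 ⟨hx, hxs.2⟩)) (Ne.symm hxs.1)
      · exact hlt x hx hxs.2 s hs

lemma exists_last_k {n : ℕ} (O : Finset (Fin n)) (k : ℕ) (h : k ≤ O.card) :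
    ∃ S ⊆ O, S.card = k ∧ ∀ x ∈ O, x ∉ S → ∀ s ∈ S, x < s :=
  exists_first_k (α := (Fin n)ᵒᵈ) O k h

lemma choose_le_of_le_half (n k : ℕ) (hkn : 2 * k ≤ n) (j : ℕ) (hj : j ≤ k) :
    n.choose j ≤ n.choose k := by
  induction k, hj using Nat.le_induction with
  | base => exact le_rfl
  | succ m hm ih =>
    exact (ih (by omega)).trans (Nat.choose_le_succ_of_lt_half_left (by omega))

/-- The positions of the letter `a`. -/
def posOf {n : ℕ} (a : Fin 2) (w : Fin n → Fin 2) : Finset (Fin n) :=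
  Finset.univ.filter (fun i => w i = a)

lemma posOf_inj {n : ℕ} (a : Fin 2) : Function.Injective (posOf (n := n) a) := by
  intro w v h
  funext i
  have h1 : i ∈ posOf a w ↔ i ∈ posOf a v := by rw [h]
  simp only [posOf, Finset.mem_filter, Finset.mem_univ, true_and] at h1
  omega

lemma card_few (n k : ℕ) (hkn : 2 * k ≤ n) (a : Fin 2) :
    (Finset.univ.filter (fun w : Fin n → Fin 2 => (posOf a w).card < k)).card
      ≤ k * n.choose k := by
  calc _ ≤ ((Finset.range k).biUnion
        (fun j => Finset.powersetCard j (Finset.univ : Finset (Fin n)))).card := by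
        apply Finset.card_le_card_of_injOn (posOf a)
        · intro w hw
          simpa [Finset.mem_powersetCard] using hw
        · exact (posOf_inj a).injOn
    _ ≤ (Finset.range k).card * n.choose k := by
        apply Finset.card_biUnion_le_card_mul
        intro j hj
        rw [Finset.card_powersetCard, Finset.card_univ, Fintype.card_fin]
        exact choose_le_of_le_half n k hkn j (Finset.mem_range.1 hj).le
    _ = _ := by rw [Finset.card_range]

lemma recover {n k : ℕ} (hk : 0 < k) (w : Fin n → Fin 2) (hw : invNum w ≤ k ^ 2)
    (S T : Finset (Fin n)) (hS : S ⊆ posOf 1 w) (hSc : S.card = k)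
    (hSl : ∀ x ∈ posOf 1 w, x ∉ S → ∀ s ∈ S, s < x)
    (hT : T ⊆ posOf 0 w) (hTc : T.card = k)
    (hTl : ∀ x ∈ posOf 0 w, x ∉ T → ∀ s ∈ T, x < s) (i : Fin n) :
    w i = 1 ↔ (i ∈ S ∨ (i ∉ T ∧ ∃ t ∈ T, t < i)) := by
  have hS1 : ∀ s ∈ S, w s = 1 := fun s hs => by simpa [posOf] using hS hs
  have hT0 : ∀ s ∈ T, w s = 0 := fun s hs => by simpa [posOf] using hT hs
  constructor
  · intro h1
    by_contra! hcon
    obtain ⟨hiS, hcon⟩ := hcon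
    have hiT : i ∉ T := fun h => by simp [hT0 i h] at h1
    have hbefore := hSl i (by simp [posOf, h1]) hiS
    have hafter := hcon hiT
    have hsub : (insert i S) ×ˢ T ⊆
        Finset.univ.filter (fun p : Fin n × Fin n => p.1 < p.2 ∧ w p.2 < w p.1) := by
      rintro ⟨s, t⟩ hst
      rw [Finset.mem_product, Finset.mem_insert] at hst
      obtain ⟨hs, ht⟩ := hst
      simp only at hs ht
      have hit : i < t := lt_of_le_of_ne (hafter t ht) (fun h => hiT (h ▸ ht))
      simp only [Finset.mem_filter, Finset.mem_univ, true_and]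
      rw [hT0 t ht]
      rcases hs with rfl | hs
      · rw [h1]; exact ⟨hit, by decide⟩
      · rw [hS1 s hs]; exact ⟨(hbefore s hs).trans hit, by decide⟩
    have hc := Finset.card_le_card hsub
    rw [Finset.card_product, Finset.card_insert_of_notMem hiS, hSc, hTc] at hc
    have : (k + 1) * k ≤ k ^ 2 := hc.trans hw
    nlinarith
  · rintro (h | ⟨hiT, t, ht, hti⟩)
    · exact hS1 i h
    · by_contra h1
      have h0 : w i = 0 := by omega
      exact absurd (hTl i (by simp [posOf, h0]) hiT t ht) (not_lt.2 hti.le)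

lemma card_many (n k : ℕ) (hk : 0 < k) :
    (Finset.univ.filter (fun w : Fin n → Fin 2 =>
      invNum w ≤ k ^ 2 ∧ k ≤ (posOf 1 w).card ∧ k ≤ (posOf 0 w).card)).card
      ≤ (n.choose k) ^ 2 := by
  have h1 : ∀ w : Fin n → Fin 2, ∃ S : Finset (Fin n), k ≤ (posOf 1 w).card →
      (S ⊆ posOf 1 w ∧ S.card = k ∧ ∀ x ∈ posOf 1 w, x ∉ S → ∀ s ∈ S, s < x) := by
    intro w
    by_cases h : k ≤ (posOf 1 w).card
    · obtain ⟨S, hS⟩ := exists_first_k (posOf 1 w) k h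
      exact ⟨S, fun _ => hS⟩
    · exact ⟨∅, fun h' => absurd h' h⟩
  have h0 : ∀ w : Fin n → Fin 2, ∃ S : Finset (Fin n), k ≤ (posOf 0 w).card →
      (S ⊆ posOf 0 w ∧ S.card = k ∧ ∀ x ∈ posOf 0 w, x ∉ S → ∀ s ∈ S, x < s) := by
    intro w
    by_cases h : k ≤ (posOf 0 w).card
    · obtain ⟨S, hS⟩ := exists_last_k (posOf 0 w) k h
      exact ⟨S, fun _ => hS⟩
    · exact ⟨∅, fun h' => absurd h' h⟩
  choose S hS using h1
  choose T hT using h0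
  calc _ ≤ ((Finset.powersetCard k (Finset.univ : Finset (Fin n))) ×ˢ
        (Finset.powersetCard k (Finset.univ : Finset (Fin n)))).card := by
        apply Finset.card_le_card_of_injOn (fun w => (S w, T w))
        · intro w hw
          simp only [Finset.coe_filter, Finset.mem_univ, true_and, Set.mem_ofPred_eq] at hw
          simp [Finset.mem_powersetCard, (hS w hw.2.1).2.1, (hT w hw.2.2).2.1]
        · intro w hw v hv hwv
          simp only [Finset.coe_filter, Finset.mem_univ, true_and, Set.mem_ofPred_eq] at hw hv
          simp only [Prod.mk.injEq] at hwv
          obtain ⟨a1, a2, a3⟩ := hS w hw.2.1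
          obtain ⟨b1, b2, b3⟩ := hT w hw.2.2
          obtain ⟨c1, c2, c3⟩ := hS v hv.2.1
          obtain ⟨d1, d2, d3⟩ := hT v hv.2.2
          funext i
          have e1 := recover hk w hw.1 _ _ a1 a2 a3 b1 b2 b3 i
          have e2 := recover hk v hv.1 _ _ c1 c2 c3 d1 d2 d3 i
          rw [hwv.1, hwv.2, ← e2] at e1
          omega
    _ = _ := by
        rw [Finset.card_product, Finset.card_powersetCard, Finset.card_univ, Fintype.card_fin, sq]

theorem count_low_inversion_words_two_letters (n k : ℕ) (hn : 0 < n) (hk : 0 < k)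
    (hkn : 2 * k ≤ n) :
    (Finset.univ.filter (fun w : Fin n → Fin 2 => invNum w ≤ k ^ 2)).card ≤
      2 * k * (n.choose k) ^ 2 := by
  have hsub : (Finset.univ.filter (fun w : Fin n → Fin 2 => invNum w ≤ k ^ 2)) ⊆
      ((Finset.univ.filter (fun w : Fin n → Fin 2 => (posOf 1 w).card < k)) ∪
       (Finset.univ.filter (fun w : Fin n → Fin 2 => (posOf 0 w).card < k))) ∪
      (Finset.univ.filter (fun w : Fin n → Fin 2 =>
        invNum w ≤ k ^ 2 ∧ k ≤ (posOf 1 w).card ∧ k ≤ (posOf 0 w).card)) := by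
    intro w hw
    simp only [Finset.mem_filter, Finset.mem_univ, true_and, Finset.mem_union] at hw ⊢
    by_cases h1 : (posOf 1 w).card < k
    · exact Or.inl (Or.inl h1)
    · by_cases h0 : (posOf 0 w).card < k
      · exact Or.inl (Or.inr h0)
      · exact Or.inr ⟨hw, not_lt.1 h1, not_lt.1 h0⟩
  have hc := Finset.card_le_card hsub
  have u1 := hc.trans (Finset.card_union_le _ _)
  have u2 := u1.trans (Nat.add_le_add_right (Finset.card_union_le _ _) _)
  have f1 := card_few n k hkn 1
  have f0 := card_few n k hkn 0
  have m := card_many n k hk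
  have hC : 2 ≤ n.choose k := by
    have := choose_le_of_le_half n k hkn 1 hk
    rw [Nat.choose_one_right] at this
    omega
  have key : k * n.choose k + k * n.choose k + (n.choose k) ^ 2 ≤ 2 * k * (n.choose k) ^ 2 := by
    generalize n.choose k = C at hC
    have : 2 * k + C ≤ 2 * k * C := by nlinarith
    nlinarith
  exact (u2.trans (Nat.add_le_add (Nat.add_le_add f1 f0) m)).trans key
end

section
/- For every natural number n and every natural number c, the number of words w : Fin n → Fin 5 with inversion number at most c is at most the product of (the number of words u : Fin n → Fin 2 with inversion number at most c) and (the maximum over 0 ≤ m ≤ n of the number of words v : Fin m → Fin 4 with inversion number at most c). -/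
/-- Pull-back along an order embedding with a map that reflects strict order where needed. -/
theorem invNum_comp_le {m n : ℕ} {A B : Type*} [LinearOrder A] [LinearOrder B]
    (w : Fin n → A) (v : Fin m → B) (e : Fin m ↪o Fin n)
    (h : ∀ i j, v j < v i → w (e j) < w (e i)) : invNum v ≤ invNum w := by
  unfold invNum
  refine Finset.card_le_card_of_injOn (fun p => (e p.1, e p.2)) ?_ ?_
  · intro p hp
    simp only [Finset.coe_filter, Finset.mem_univ, true_and, Set.mem_setOf_eq] at hp ⊢
    exact ⟨e.lt_iff_lt.2 hp.1, h _ _ hp.2⟩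
  · rintro ⟨a, b⟩ _ ⟨a', b'⟩ _ hab
    simpa using hab

/-- Collapse to two symbols. -/
def collapseWord {n : ℕ} (w : Fin n → Fin 5) : Fin n → Fin 2 :=
  fun i => if w i = 0 then 0 else 1

/-- Shift letters down by one. -/
def shiftLetter (a : Fin 5) : Fin 4 := ⟨a.val - 1, by omega⟩

theorem count_words_five_le_two_mul_four (n c : ℕ) :
    (Finset.univ.filter (fun w : Fin n → Fin 5 => invNum w ≤ c)).card ≤
      (Finset.univ.filter (fun u : Fin n → Fin 2 => invNum u ≤ c)).card *
        (Finset.range (n + 1)).sup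
          (fun m => (Finset.univ.filter (fun v : Fin m → Fin 4 => invNum v ≤ c)).card) := by
  rw [mul_comm]
  apply Finset.card_le_mul_card_image_of_maps_to (f := collapseWord)
  · intro w hw
    simp only [Finset.mem_filter, Finset.mem_univ, true_and] at hw ⊢
    refine le_trans (invNum_comp_le w _ (RelEmbedding.refl _) ?_) hw
    intro i j hij
    have key : ∀ a b : Fin 5, (if a = 0 then (0 : Fin 2) else 1) < (if b = 0 then 0 else 1) →
        a < b := by decide
    exact key _ _ hij
  · intro u _
    set S : Finset (Fin n) := Finset.univ.filter (fun i => u i = 1) with hS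
    have hm : S.card ∈ Finset.range (n + 1) := by
      have := Finset.card_le_univ S
      simp only [Fintype.card_fin] at this
      simp only [Finset.mem_range]
      omega
    refine le_trans ?_ (Finset.le_sup
      (f := fun m => (Finset.univ.filter (fun v : Fin m → Fin 4 => invNum v ≤ c)).card) hm)
    have key : ∀ a b : Fin 5, shiftLetter a < shiftLetter b → a < b := by decide
    have key2 : ∀ a b : Fin 5, a ≠ 0 → b ≠ 0 → shiftLetter a = shiftLetter b → a = b := by decide
    refine Finset.card_le_card_of_injOn
      (fun w k => shiftLetter (w (S.orderEmbOfFin rfl k))) ?_ ?_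
    · intro w hw
      simp only [Finset.coe_filter, Finset.mem_filter, Finset.mem_univ, true_and,
        Set.mem_setOf_eq] at hw ⊢
      exact le_trans (invNum_comp_le w _ (S.orderEmbOfFin rfl) (fun i j h => key _ _ h)) hw.1
    · intro w hw w' hw' h
      simp only [Finset.coe_filter, Finset.mem_filter, Finset.mem_univ, true_and,
        Set.mem_setOf_eq] at hw hw'
      funext i
      have h1 := congrFun hw.2 i
      have h2 := congrFun hw'.2 i
      simp only [collapseWord] at h1 h2
      by_cases hi : u i = 1
      · have hiS : i ∈ Set.range (S.orderEmbOfFin rfl) := by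
          rw [Finset.range_orderEmbOfFin]
          simp [hS, hi]
        obtain ⟨k, rfl⟩ := hiS
        rw [hi] at h1 h2
        refine key2 _ _ ?_ ?_ (congrFun h k)
        · intro h0
          simp [h0] at h1
        · intro h0
          simp [h0] at h2
      · have h3 : w i = 0 := by
          by_contra h0
          simp [h0] at h1
          exact hi h1.symm
        have h4 : w' i = 0 := by
          by_contra h0
          simp [h0] at h2
          exact hi h2.symm
        rw [h3, h4]
end

section
/- Let (α, μ) be a probability space and f : α → α an ergodic measure-preserving map (Ergodic f μ). Let K ⊆ α be a measurable set with μ(K) > 0 and let ε > 0. Then for μ-almost every x ∈ α there exists N₀ ∈ ℕ such that for every natural number N ≥ N₀ there exists n ∈ ℕ with N ≤ n and (n : ℝ) ≤ (1+ε)·N and f^[n](x) ∈ K. -/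
open MeasureTheory

/-- Points of `K` that do not return to `K` within `k` steps. -/
def noRet {α : Type*} (f : α → α) (K : Set α) (k : ℕ) : Set α :=
  {x | x ∈ K ∧ ∀ j, 1 ≤ j → j ≤ k → f^[j] x ∉ K}

theorem measurableSet_noRet {α : Type*} [MeasurableSpace α] {f : α → α} (hf : Measurable f)
    {K : Set α} (hK : MeasurableSet K) (k : ℕ) : MeasurableSet (noRet f K k) := by
  have : noRet f K k = K ∩ ⋂ j, ⋂ (_ : 1 ≤ j), ⋂ (_ : j ≤ k), (f^[j] ⁻¹' K)ᶜ := by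
    ext x; simp [noRet]
  rw [this]
  exact hK.inter (MeasurableSet.iInter fun j => MeasurableSet.iInter fun _ =>
    MeasurableSet.iInter fun _ => ((hf.iterate j) hK).compl)

/-- Kac inequality. -/
theorem kac_tsum_le {α : Type*} [MeasurableSpace α] (μ : Measure α) [IsProbabilityMeasure μ]
    {f : α → α} (hf : MeasurePreserving f μ μ) {K : Set α} (hK : MeasurableSet K) :
    ∑' k, μ (noRet f K k) ≤ 1 := by
  refine ENNReal.tsum_le_of_sum_range_le fun n => ?_
  have h1 : ∀ k ∈ Finset.range n, μ (noRet f K k) = μ (f^[n - k] ⁻¹' noRet f K k) := fun k _ =>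
    ((hf.iterate (n - k)).measure_preimage
      (measurableSet_noRet hf.measurable hK k).nullMeasurableSet).symm
  rw [Finset.sum_congr rfl h1, ← measure_biUnion_finset]
  · exact prob_le_one
  · have key : ∀ a b x, a < b → b < n → x ∈ f^[n - a] ⁻¹' noRet f K a →
        x ∈ f^[n - b] ⁻¹' noRet f K b → False := by
      intro a b x hab hb ha hb'
      refine hb'.2 (b - a) (by omega) (by omega) ?_
      rw [← Function.iterate_add_apply, show b - a + (n - b) = n - a by omega]
      exact ha.1
    intro a ha b hb hab
    simp only [Finset.coe_range, Set.mem_Iio] at ha hb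
    refine Set.disjoint_left.2 fun x hxa hxb => ?_
    rcases lt_or_gt_of_ne hab with h | h
    · exact key a b x h hb hxa hxb
    · exact key b a x h ha hxb hxa
  · intro k _
    exact (hf.measurable.iterate _) (measurableSet_noRet hf.measurable hK k)

theorem ae_frequently_hit {α : Type*} [MeasurableSpace α] (μ : Measure α) [IsProbabilityMeasure μ]
    {f : α → α} (hf : Ergodic f μ) {K : Set α} (hK : MeasurableSet K) (hKpos : 0 < μ K) :
    ∀ᵐ x ∂μ, ∃ᶠ n in Filter.atTop, f^[n] x ∈ K := by
  have hcons := hf.toMeasurePreserving.conservative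
  have h1 := hcons.ae_mem_imp_frequently_image_mem hK.nullMeasurableSet
  set A : Set α := {x | ∃ᶠ n in Filter.atTop, f^[n] x ∈ K} with hA
  have hAm : MeasurableSet A := by
    have : A = ⋂ i : ℕ, ⋃ n : ℕ, ⋃ (_ : i ≤ n), f^[n] ⁻¹' K := by
      ext x; simp [hA, Filter.frequently_atTop]
    rw [this]
    exact MeasurableSet.iInter fun i => MeasurableSet.iUnion fun n => MeasurableSet.iUnion fun _ =>
      (hf.measurable.iterate n) hK
  have hinv : f ⁻¹' A = A := by
    ext x
    simp only [hA, Set.mem_preimage, Set.mem_setOf_eq, ← Function.iterate_succ_apply]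
    simp only [Filter.frequently_atTop]
    constructor
    · intro h a
      obtain ⟨b, hb, hx⟩ := h a
      exact ⟨b + 1, by omega, hx⟩
    · intro h a
      obtain ⟨b, hb, hx⟩ := h (a + 1)
      exact ⟨b - 1, by omega, by rwa [show (b - 1).succ = b by omega]⟩
  rcases hf.toPreErgodic.prob_eq_zero_or_one hAm hinv with h | h
  · exfalso
    have h2 : μ K ≤ μ A := measure_mono_ae h1
    rw [h] at h2
    exact absurd hKpos (not_lt.2 h2)
  · exact (mem_ae_iff_prob_eq_one hAm).2 h

theorem ae_eventually_window_hitting_map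
    {α : Type*} [MeasurableSpace α] (μ : Measure α) [IsProbabilityMeasure μ]
    (f : α → α) (hf : Ergodic f μ)
    (K : Set α) (hK : MeasurableSet K) (hKpos : 0 < μ K) (ε : ℝ) (hε : 0 < ε) :
    ∀ᵐ x ∂μ, ∃ N₀ : ℕ, ∀ N : ℕ, N₀ ≤ N →
      ∃ n : ℕ, N ≤ n ∧ (n : ℝ) ≤ (1 + ε) * N ∧ f^[n] x ∈ K := by
  classical
  obtain ⟨M', hM'⟩ := exists_nat_one_div_lt hε
  set M : ℕ := M' + 1 with hM
  have hMε : 1 / (M : ℝ) < ε := by rw [hM]; push_cast; exact hM'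
  have hmp := hf.toMeasurePreserving
  have hsum : ∑' n : ℕ, μ (f^[n] ⁻¹' noRet f K (n / M)) ≠ ⊤ := by
    have h1 : ∀ n : ℕ, μ (f^[n] ⁻¹' noRet f K (n / M)) = μ (noRet f K (n / M)) := fun n =>
      (hmp.iterate n).measure_preimage
        (measurableSet_noRet hf.measurable hK _).nullMeasurableSet
    simp_rw [h1]
    have h2 : ∑' n : ℕ, μ (noRet f K (n / M)) = ∑' p : ℕ × Fin M, μ (noRet f K p.1) :=
      (Nat.divModEquiv M).tsum_eq (fun p : ℕ × Fin M => μ (noRet f K p.1))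
    rw [h2, ENNReal.tsum_prod']
    simp only [tsum_fintype, Finset.sum_const, Finset.card_univ, Fintype.card_fin, nsmul_eq_mul]
    rw [ENNReal.tsum_mul_left]
    exact ENNReal.mul_ne_top (ENNReal.natCast_ne_top M)
      (ne_top_of_le_ne_top ENNReal.one_ne_top (kac_tsum_le μ hmp hK))
  filter_upwards [ae_eventually_notMem hsum, ae_frequently_hit μ hf hK hKpos] with x hx1 hx2
  obtain ⟨N₁, hN₁⟩ := Filter.eventually_atTop.1 hx1
  obtain ⟨m₀, hm₀, hm₀K⟩ := Filter.frequently_atTop.1 hx2 N₁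
  refine ⟨m₀, fun N hN => ?_⟩
  set m := Nat.findGreatest (fun n => f^[n] x ∈ K) N with hm
  have hmK : f^[m] x ∈ K := Nat.findGreatest_spec (P := fun n => f^[n] x ∈ K) hN hm₀K
  have hm0 : m₀ ≤ m := Nat.le_findGreatest hN hm₀K
  have hmN : m ≤ N := Nat.findGreatest_le N
  have hnot := hN₁ m (hm₀.trans hm0)
  have : ∃ j, 1 ≤ j ∧ j ≤ m / M ∧ f^[j] (f^[m] x) ∈ K := by
    by_contra! hcon
    exact hnot ⟨hmK, hcon⟩
  obtain ⟨j, hj1, hj2, hjK⟩ := this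
  rw [← Function.iterate_add_apply] at hjK
  refine ⟨j + m, ?_, ?_, hjK⟩
  · by_contra! hlt
    exact Nat.findGreatest_is_greatest (P := fun n => f^[n] x ∈ K) (n := N) (k := j + m)
      (by omega) hlt.le hjK
  · have h3 : (j : ℝ) ≤ (m : ℝ) / M := (Nat.cast_le.2 hj2).trans Nat.cast_div_le
    have h4 : (m : ℝ) ≤ N := Nat.cast_le.2 hmN
    have h5 : (m : ℝ) / M ≤ ε * N := by
      calc (m : ℝ) / M = 1 / M * m := by ring
        _ ≤ ε * N := by gcongr
    push_cast
    linarith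
end
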